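/- Let J ⊆ 𝔽₂⁴ and let L_J be the subgroup of the Kummer lattice K generated by {e_i : i ∈ J}. Then L_J is a primitive sublattice of K — i.e., K ∩ span_ℚ{e_i : i ∈ J} = span_ℤ{e_i : i ∈ J} — if and only if J contains no affine hyperplane of 𝔽₂⁴. -/

import Mathlib

/-- The index set `𝔽₂⁴`. -/
abbrev F24 := Fin 4 → ZMod 2

/-- An affine hyperplane in `𝔽₂⁴`: the level set of a nonzero linear functional. -/
def IsHyperplane (H : Set F24) : Prop :=
  ∃ (φ : F24 →ₗ[ZMod 2] ZMod 2) (c : ZMod 2), φ ≠ 0 ∧ H = {x | φ x = c}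

/-- The standard basis vector `e_i` of `ℚ^16`, coordinates indexed by `𝔽₂⁴`. -/
def eVec (i : F24) : F24 → ℚ := Pi.single i 1

/-- The half-sum `(1/2)·Σ_{i ∈ H} e_i` associated to a subset `H ⊆ 𝔽₂⁴`. -/
noncomputable def halfSum (H : Set F24) : F24 → ℚ :=
  H.indicator fun _ => (1 / 2 : ℚ)

/-- The Kummer lattice `K ⊆ ℚ^16`: the ℤ-span of the sixteen standard basis vectors
`e_i` together with the vectors `(1/2)·Σ_{i ∈ H} e_i` for all affine hyperplanes `H`. -/
noncomputable def KummerLattice : Submodule ℤ (F24 → ℚ) :=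
  Submodule.span ℤ
    (Set.range eVec ∪ {v | ∃ H : Set F24, IsHyperplane H ∧ v = halfSum H})

/-!
A Kummer-type lattice is the Construction A lattice of the binary code spanned by the indicator
functions of the affine hyperplanes. For a Construction A lattice, the coordinate vectors in `J`
generate a primitive sublattice exactly when no nonzero codeword is supported in `J`: such a word,
lifted to the integers and divided by the modulus, is an obstruction, and every obstruction arises
in this way. The codewords here are affine functions `V → 𝔽₂`, so the support of a nonzero one is
either an affine hyperplane or all of `V`.
-/

section CoordinateSpan

variable {ι R A : Type*} [Finite ι] [DecidableEq ι] [CommSemiring R] [Semiring A] [Algebra R A]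

theorem mem_span_single_image_iff {s : Set ι} {v : ι → A} :
    v ∈ Submodule.span R ((fun i => Pi.single i (1 : A)) '' s) ↔
      (∀ i ∉ s, v i = 0) ∧ ∀ i, v i ∈ Set.range (algebraMap R A) := by
  cases nonempty_fintype ι
  constructor
  · rw [Finsupp.mem_span_image_iff_linearCombination]
    rintro ⟨l, hl, rfl⟩
    have coord (i : ι) :
        Finsupp.linearCombination R (fun i => Pi.single i (1 : A)) l i = algebraMap R A (l i) := by
      simp [Finsupp.linearCombination_apply, Finsupp.sum_fintype, Pi.single_apply,
        Algebra.algebraMap_eq_smul_one]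
    refine ⟨fun i hi => ?_, fun i => ⟨l i, (coord i).symm⟩⟩
    rw [coord, (Finsupp.mem_supported' R l).1 hl i hi, map_zero]
  · rintro ⟨hs, hv⟩
    choose w hw using hv
    rw [← Finset.univ_sum_single v]
    refine Submodule.sum_mem _ fun i _ => ?_
    by_cases hi : i ∈ s
    · have hsingle : Pi.single i (v i) = w i • (Pi.single i 1 : ι → A) := by
        rw [← Pi.single_smul, ← hw, Algebra.algebraMap_eq_smul_one]
      rw [hsingle]
      exact Submodule.smul_mem _ _ (Submodule.subset_span ⟨i, hi, rfl⟩)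
    · simp [hs i hi]

end CoordinateSpan

section ConstructionA

variable {ι : Type*} {N : ℕ}

variable (ι N) in
/-- Coordinatewise reduction of integral vectors modulo `N`. -/
def reduceMod : (ι → ℤ) →ₗ[ℤ] ι → ZMod N :=
  (Algebra.linearMap ℤ (ZMod N)).compLeft ι

variable (ι N) in
/-- The embedding `w ↦ w / N` of the integral vectors into `ℚ^ι`; it is zero for `N = 0`. -/
def divBy : (ι → ℤ) →ₗ[ℤ] ι → ℚ :=
  (N : ℚ)⁻¹ • (Algebra.linearMap ℤ ℚ).compLeft ι

@[simp]
theorem reduceMod_apply (w : ι → ℤ) (i : ι) : reduceMod ι N w i = w i := rfl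

@[simp]
theorem divBy_apply (w : ι → ℤ) (i : ι) : divBy ι N w i = w i / N :=
  inv_mul_eq_div _ _

/-- The Construction A lattice of a code `C` over `ℤ/N`, scaled so that it contains `ℤ^ι`: the
vectors `w / N` with `w` an integral vector whose reduction modulo `N` lies in `C`. -/
def constructionA (C : Submodule ℤ (ι → ZMod N)) : Submodule ℤ (ι → ℚ) :=
  (C.comap (reduceMod ι N)).map (divBy ι N)

theorem divBy_apply_mem_range_iff [NeZero N] (w : ι → ℤ) (i : ι) :
    divBy ι N w i ∈ Set.range (algebraMap ℤ ℚ) ↔ reduceMod ι N w i = 0 := by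
  have hN : (N : ℚ) ≠ 0 := NeZero.ne _
  rw [reduceMod_apply, ZMod.intCast_zmod_eq_zero_iff_dvd]
  refine exists_congr fun k => ?_
  rw [divBy_apply, eq_div_iff hN, eq_intCast, eq_comm, mul_comm]
  norm_cast

theorem constructionA_primitive_iff [Finite ι] [DecidableEq ι] [NeZero N]
    (C : Submodule ℤ (ι → ZMod N)) (J : Set ι) :
    (∀ v : ι → ℚ, v ∈ constructionA C →
        v ∈ Submodule.span ℚ ((fun i => Pi.single i 1) '' J) →
          v ∈ Submodule.span ℤ ((fun i => Pi.single i 1) '' J)) ↔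
      ∀ c ∈ C, Function.support c ⊆ J → c = 0 := by
  simp only [mem_span_single_image_iff]
  constructor
  · intro h c hc hJ
    let w : ι → ℤ := fun i => (c i).cast
    have hw : reduceMod ι N w = c := funext fun i => ZMod.intCast_zmod_cast (c i)
    have hvanish : ∀ i ∉ J, divBy ι N w i = 0 := fun i hi => by
      simp [w, Function.support_subset_iff'.1 hJ i hi]
    have hmem : divBy ι N w ∈ constructionA C :=
      Submodule.mem_map_of_mem (Submodule.mem_comap.2 (hw ▸ hc))
    have hint := (h _ hmem ⟨hvanish, by simp⟩).2
    rw [← hw]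
    exact funext fun i => (divBy_apply_mem_range_iff w i).1 (hint i)
  · rintro h _ ⟨w, hw, rfl⟩ ⟨hvanish, -⟩
    have hsupp : Function.support (reduceMod ι N w) ⊆ J := by
      refine Function.support_subset_iff'.2 fun i hi => ?_
      exact (divBy_apply_mem_range_iff w i).1 ⟨0, by rw [hvanish i hi, map_zero]⟩
    have hzero : reduceMod ι N w = 0 := h _ hw hsupp
    exact ⟨hvanish, fun i => (divBy_apply_mem_range_iff w i).2 (congrFun hzero i)⟩

theorem divBy_indicator_one (H : Set ι) :
    divBy ι N (H.indicator 1) = H.indicator fun _ => (1 / N : ℚ) := by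
  ext i
  by_cases hi : i ∈ H <;> simp [hi]

theorem reduceMod_indicator_one (H : Set ι) :
    reduceMod ι N (H.indicator 1) = H.indicator 1 := by
  ext i
  by_cases hi : i ∈ H <;> simp [hi]

theorem single_one_mem_constructionA [DecidableEq ι] [NeZero N]
    (C : Submodule ℤ (ι → ZMod N)) (i : ι) : Pi.single i 1 ∈ constructionA C := by
  have hdiv : divBy ι N (Pi.single i (N : ℤ)) = Pi.single i 1 := by
    ext j
    by_cases hj : j = i <;> simp [hj, NeZero.ne N]
  have hred : reduceMod ι N (Pi.single i (N : ℤ)) = 0 := by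
    ext j
    by_cases hj : j = i <;> simp [hj]
  exact ⟨_, by simp [hred], hdiv⟩

theorem span_single_union_indicator_eq_constructionA [Finite ι] [DecidableEq ι] [NeZero N]
    (S : Set (Set ι)) :
    Submodule.span ℤ (Set.range (fun i => Pi.single i 1) ∪
        (fun H => H.indicator fun _ => (1 / N : ℚ)) '' S) =
      constructionA (Submodule.span ℤ ((fun H => H.indicator (1 : ι → ZMod N)) '' S)) := by
  have hlift : Submodule.span ℤ ((fun H => H.indicator (1 : ι → ZMod N)) '' S) =
      (Submodule.span ℤ ((fun H => H.indicator (1 : ι → ℤ)) '' S)).map (reduceMod ι N) := by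
    simp only [Submodule.map_span, Set.image_image, reduceMod_indicator_one]
  apply le_antisymm
  · rw [Submodule.span_le]
    rintro _ (⟨i, rfl⟩ | ⟨H, hH, rfl⟩)
    · exact single_one_mem_constructionA _ i
    · refine ⟨H.indicator 1, ?_, divBy_indicator_one H⟩
      rw [SetLike.mem_coe, Submodule.mem_comap, reduceMod_indicator_one]
      exact Submodule.subset_span ⟨H, hH, rfl⟩
  · rw [constructionA, Submodule.map_le_iff_le_comap, hlift, Submodule.comap_map_eq]
    refine sup_le (Submodule.span_le.2 ?_) fun w hw => ?_
    · rintro _ ⟨H, hH, rfl⟩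
      exact Submodule.subset_span (Or.inr ⟨H, hH, (divBy_indicator_one H).symm⟩)
    · refine Submodule.span_mono Set.subset_union_left ?_
      rw [← Set.image_univ, mem_span_single_image_iff]
      exact ⟨by simp, fun i => (divBy_apply_mem_range_iff w i).2 (congrFun hw i)⟩

end ConstructionA

section HyperplaneCode

variable {V : Type*} [AddCommGroup V] [Module (ZMod 2) V]

/-- An affine hyperplane in an `𝔽₂`-vector space: a level set of a nonzero linear functional. -/
def IsAffineHyperplane (H : Set V) : Prop :=
  ∃ (φ : Module.Dual (ZMod 2) V) (c : ZMod 2), φ ≠ 0 ∧ H = {x | φ x = c}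

theorem IsAffineHyperplane.nonempty {H : Set V} (hH : IsAffineHyperplane H) : H.Nonempty := by
  obtain ⟨φ, c, hφ, rfl⟩ := hH
  exact LinearMap.surjective hφ c

variable (V) in
/-- The binary code of length `|V|` spanned by the indicator functions of the affine hyperplanes;
for `V = 𝔽₂ᵐ` with `m ≥ 1` it is the first-order Reed–Muller code. -/
def hyperplaneCode : Submodule ℤ (V → ZMod 2) :=
  Submodule.span ℤ ((fun H => H.indicator 1) '' {H | IsAffineHyperplane H})

theorem exists_affineMap_of_mem_hyperplaneCode {c : V → ZMod 2} (hc : c ∈ hyperplaneCode V) :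
    ∃ f : V →ᵃ[ZMod 2] ZMod 2, ⇑f = c := by
  induction hc using Submodule.span_induction with
  | mem _ h =>
    obtain ⟨_, ⟨φ, a, -, rfl⟩, rfl⟩ := h
    refine ⟨φ.toAffineMap + AffineMap.const _ _ (a + 1), funext fun x => ?_⟩
    have hbit : ∀ y b : ZMod 2, y + (b + 1) = if y = b then 1 else 0 := by decide
    simpa [Set.indicator_apply] using hbit (φ x) a
  | zero => exact ⟨0, rfl⟩
  | add _ _ _ _ hf hg =>
    obtain ⟨f, rfl⟩ := hf
    obtain ⟨g, rfl⟩ := hg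
    exact ⟨f + g, rfl⟩
  | smul n _ _ hf =>
    obtain ⟨f, rfl⟩ := hf
    exact ⟨n • f, rfl⟩

theorem exists_isAffineHyperplane_of_mem_hyperplaneCode {c : V → ZMod 2}
    (hc : c ∈ hyperplaneCode V) (hc0 : c ≠ 0) : ∃ H : Set V, IsAffineHyperplane H := by
  by_contra! hempty
  have hbot : hyperplaneCode V = ⊥ := by simp [hyperplaneCode, hempty]
  exact hc0 ((Submodule.mem_bot ℤ).1 (hbot ▸ hc))

theorem exists_isAffineHyperplane_subset_support {c : V → ZMod 2}
    (hc : c ∈ hyperplaneCode V) (hc0 : c ≠ 0) :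
    ∃ H : Set V, IsAffineHyperplane H ∧ H ⊆ Function.support c := by
  obtain ⟨f, rfl⟩ := exists_affineMap_of_mem_hyperplaneCode hc
  have hdecomp (x : V) : f x = f.linear x + f 0 := congrFun f.decomp x
  by_cases hlin : f.linear = 0
  · obtain ⟨H, hH⟩ := exists_isAffineHyperplane_of_mem_hyperplaneCode hc hc0
    have hconst (x : V) : f x = f 0 := by simpa [hlin] using hdecomp x
    refine ⟨H, hH, fun x _ hx => hc0 (funext fun y => ?_)⟩
    rw [hconst y, ← hconst x, hx, Pi.zero_apply]
  · refine ⟨{x | f.linear x = 1 - f 0}, ⟨f.linear, _, hlin, rfl⟩, ?_⟩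
    rintro x (hx : f.linear x = 1 - f 0)
    rw [Function.mem_support, hdecomp, hx, sub_add_cancel]
    exact one_ne_zero

theorem forall_mem_hyperplaneCode_support_subset_iff (J : Set V) :
    (∀ c ∈ hyperplaneCode V, Function.support c ⊆ J → c = 0) ↔
      ¬ ∃ H : Set V, IsAffineHyperplane H ∧ H ⊆ J := by
  constructor
  · rintro h ⟨H, hH, hHJ⟩
    have hzero := h _ (Submodule.subset_span ⟨H, hH, rfl⟩)
      (Set.support_indicator_subset.trans hHJ)
    obtain ⟨x, hx⟩ := hH.nonempty
    simpa [hx] using congrFun hzero x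
  · intro h c hc hcJ
    by_contra hc0
    obtain ⟨H, hH, hHc⟩ := exists_isAffineHyperplane_subset_support hc hc0
    exact h ⟨H, hH, hHc.trans hcJ⟩

end HyperplaneCode

section KummerTypeLattice

variable (V : Type*) [AddCommGroup V] [Module (ZMod 2) V] [DecidableEq V]

/-- The analogue of the Kummer lattice for an `𝔽₂`-vector space `V`: the subgroup of `ℚ^V` generated
by the standard basis and the half-sums over affine hyperplanes. -/
def kummerTypeLattice : Submodule ℤ (V → ℚ) :=
  Submodule.span ℤ (Set.range (fun i => Pi.single i 1) ∪
    {v | ∃ H : Set V, IsAffineHyperplane H ∧ v = H.indicator fun _ => (1 / 2 : ℚ)})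

theorem kummerTypeLattice_eq_constructionA [Finite V] :
    kummerTypeLattice V = constructionA (hyperplaneCode V) := by
  rw [hyperplaneCode, ← span_single_union_indicator_eq_constructionA, kummerTypeLattice]
  congr 2
  ext v
  simp [eq_comm]

variable {V}

theorem kummer_sublattice_primitive_iff_general [Finite V] (J : Set V) :
    (∀ v : V → ℚ, v ∈ kummerTypeLattice V →
        v ∈ Submodule.span ℚ ((fun i => Pi.single i 1) '' J) →
          v ∈ Submodule.span ℤ ((fun i => Pi.single i 1) '' J)) ↔
      ¬ ∃ H : Set V, IsAffineHyperplane H ∧ H ⊆ J := by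
  rw [kummerTypeLattice_eq_constructionA, constructionA_primitive_iff,
    forall_mem_hyperplaneCode_support_subset_iff]

end KummerTypeLattice

/-- The sublattice of the Kummer lattice generated by `{e_i : i ∈ J}` is primitive
(`K ∩ span_ℚ{e_i : i ∈ J} = span_ℤ{e_i : i ∈ J}`) if and only if `J` contains no
affine hyperplane of `𝔽₂⁴`. -/
theorem kummer_sublattice_primitive_iff (J : Set F24) :
    (∀ v : F24 → ℚ, v ∈ KummerLattice →
        v ∈ Submodule.span ℚ (eVec '' J) → v ∈ Submodule.span ℤ (eVec '' J)) ↔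
      ¬ ∃ H : Set F24, IsHyperplane H ∧ H ⊆ J :=
  kummer_sublattice_primitive_iff_general J
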